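/- arXiv:1801.08778 — 4 statements merged into one kernel-verified Lean document; each statement's English description precedes it below -/
import Mathlib

section
/- Let ϖ : ℕ → A be the unique one-sided infinite word over A having every block p_k as a prefix (it exists since each p_k is a prefix of p_{k+1} and |p_k| → ∞). Then ϖ is periodic — i.e. there exists p ≥ 1 with ϖ(j+p) = ϖ(j) for all j ∈ ℕ — if and only if #A_ev = 1. -/
/-!
Write a position `i ≥ 1` in the mixed radix system with radices `n 0, n 1, …`, where digit `0` is
the least significant one. The letter of the infinite word at position `i` is `a k`, where `k` is
the number of trailing zeros of `i`. Like a `p`-adic valuation, the number of trailing zeros of a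
sum is the smaller of those of the summands whenever these differ.

Let `w m = n 0 * ⋯ * n (m - 1)` be the place values. If `p` is a period with `k` trailing zeros,
then for `m > k` the position `w m` has `m` trailing zeros and `w m + p` has `k`, so `a m = a k`:
the sequence `a` is eventually constant. Conversely, if `a` is constant from `K` on, then `w K` is a
period, since adding `w K` changes the number of trailing zeros only if it is at least `K` both
before and after. Over a finite alphabet, `a` is eventually constant exactly when a single letter
occurs infinitely often in it.
-/

open Filter

/-- The blocks `p k` of the simple Toeplitz subshift coded by `a` and `n`:
`p 0 = a 0 ^ (n 0 - 1)` and `p (k+1)` consists of `n (k+1)` copies of `p k`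
separated by `n (k+1) - 1` single letters `a (k+1)`. -/
def ToeplitzBlock {A : Type*} (a : ℕ → A) (n : ℕ → ℕ) : ℕ → List A
  | 0 => List.replicate (n 0 - 1) (a 0)
  | k + 1 => List.intercalate [a (k + 1)] (List.replicate (n (k + 1)) (ToeplitzBlock a n k))

/-- `lenPrev a n k = |p (k-1)|`, with the convention `|p (-1)| = 0`. -/
def lenPrev {A : Type*} (a : ℕ → A) (n : ℕ → ℕ) : ℕ → ℕ
  | 0 => 0
  | k + 1 => (ToeplitzBlock a n k).length

/-- The language of the simple Toeplitz subshift: all finite words occurring as a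
factor of some block `p k`. -/
def ToeplitzLang {A : Type*} (a : ℕ → A) (n : ℕ → ℕ) : Set (List A) :=
  {u | ∃ k, u <:+: ToeplitzBlock a n k}

/-- The complexity function `C L`. -/
noncomputable def cmpl {A : Type*} (a : ℕ → A) (n : ℕ → ℕ) (L : ℕ) : ℕ :=
  Set.ncard {u | u ∈ ToeplitzLang a n ∧ u.length = L}

/-- The palindrome complexity function `P L`. -/
noncomputable def palCmpl {A : Type*} (a : ℕ → A) (n : ℕ → ℕ) (L : ℕ) : ℕ :=
  Set.ncard {u | u ∈ ToeplitzLang a n ∧ u.length = L ∧ u.reverse = u}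

/-- `Ak a k = {a j : j ≥ k}`. -/
def Ak {A : Type*} (a : ℕ → A) (k : ℕ) : Set A := {x | ∃ j, k ≤ j ∧ a j = x}

/-- The eventual alphabet `A_ev = ⋂ k, A_k`. -/
def Aev {A : Type*} (a : ℕ → A) : Set A := ⋂ k, Ak a k

/-- `Kf a k = min {j > k : {a (k+1), …, a j} = A (k+1)}`. -/
noncomputable def Kf {A : Type*} (a : ℕ → A) (k : ℕ) : ℕ :=
  sInf {j | k < j ∧ {x | ∃ i, k + 1 ≤ i ∧ i ≤ j ∧ a i = x} = Ak a (k + 1)}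

/-- The positions `m i` at which `Kf` increases: `m 0 = 0` and
`m (i+1) = min {j > m i : Kf j > Kf (m i)}`. -/
noncomputable def mseq {A : Type*} (a : ℕ → A) : ℕ → ℕ
  | 0 => 0
  | i + 1 => sInf {j | mseq a i < j ∧ Kf a (mseq a i) < Kf a j}

/-- The repetitivity function `R L`: the least `L'` such that every word of
length `L` of the language is a factor of every word of length `L'`. -/
noncomputable def repet {A : Type*} (a : ℕ → A) (n : ℕ → ℕ) (L : ℕ) : ℕ :=
  sInf {L' | ∀ u ∈ ToeplitzLang a n, u.length = L →
    ∀ w ∈ ToeplitzLang a n, w.length = L' → u <:+: w}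

/-- The place value of the digit with index `k` in the mixed radix system with radices
`n 0, n 1, …`, so that `placeValue n 0 = 1`. It equals `|p (k-1)| + 1` for `k ≥ 1`. -/
def placeValue (n : ℕ → ℕ) (k : ℕ) : ℕ := ∏ i ∈ Finset.range k, n i

/-- The number of trailing zeros of `i` in the mixed radix system with radices `n 0, n 1, …`: the
analogue of a `p`-adic valuation that determines the letter of the Toeplitz word at position `i`.
Bounding the search by `i` loses nothing when `0 < i` and all radices are at least `2`; the value
at `i = 0` is the junk value `0`. -/
def trailingZeros (n : ℕ → ℕ) (i : ℕ) : ℕ := Nat.findGreatest (fun k => placeValue n k ∣ i) i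

/-- The one-sided infinite Toeplitz word coded by `a` and `n`. Its letters are indexed from `0`,
whereas trailing zeros refer to positions counted from `1`. -/
def toeplitzWord {A : Type*} (a : ℕ → A) (n : ℕ → ℕ) (j : ℕ) : A := a (trailingZeros n (j + 1))

section MixedRadix

variable {n : ℕ → ℕ}

lemma placeValue_zero : placeValue n 0 = 1 := Finset.prod_range_zero _

lemma placeValue_succ (k : ℕ) : placeValue n (k + 1) = n k * placeValue n k :=
  Finset.prod_range_succ_comm _ _

lemma placeValue_dvd_placeValue {k l : ℕ} (hkl : k ≤ l) : placeValue n k ∣ placeValue n l :=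
  Finset.prod_dvd_prod_of_subset _ _ _ (Finset.range_subset_range.2 hkl)

lemma lt_placeValue (hn : ∀ k, 2 ≤ n k) (k : ℕ) : k < placeValue n k := by
  induction k with
  | zero => simp only [placeValue_zero, zero_lt_one]
  | succ k ih =>
    rw [placeValue_succ]
    nlinarith [hn k]

lemma placeValue_pos (hn : ∀ k, 2 ≤ n k) (k : ℕ) : 0 < placeValue n k :=
  k.zero_le.trans_lt (lt_placeValue hn k)

lemma le_trailingZeros_iff (hn : ∀ k, 2 ≤ n k) {i k : ℕ} (hi : 0 < i) :
    k ≤ trailingZeros n i ↔ placeValue n k ∣ i := by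
  constructor
  · intro hk
    have hspec : placeValue n (trailingZeros n i) ∣ i :=
      Nat.findGreatest_spec (P := fun k => placeValue n k ∣ i) i.zero_le
        (placeValue_zero (n := n) ▸ one_dvd i)
    exact (placeValue_dvd_placeValue hk).trans hspec
  · intro hk
    exact Nat.le_findGreatest ((lt_placeValue hn k).le.trans (Nat.le_of_dvd hi hk)) hk

lemma trailingZeros_lt_of_lt_placeValue (hn : ∀ k, 2 ≤ n k) {i k : ℕ} (hi : 0 < i)
    (hik : i < placeValue n k) : trailingZeros n i < k :=
  not_le.1 fun h => Nat.not_dvd_of_pos_of_lt hi hik ((le_trailingZeros_iff hn hi).1 h)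

lemma trailingZeros_eq_iff (hn : ∀ k, 2 ≤ n k) {i k : ℕ} (hi : 0 < i) :
    trailingZeros n i = k ↔ placeValue n k ∣ i ∧ ¬ placeValue n (k + 1) ∣ i := by
  rw [← le_trailingZeros_iff hn hi, ← le_trailingZeros_iff hn hi]
  omega

lemma trailingZeros_mul_placeValue (hn : ∀ k, 2 ≤ n k) {i k : ℕ} (hi : ¬ n k ∣ i) :
    trailingZeros n (i * placeValue n k) = k := by
  have hi₀ : 0 < i := Nat.pos_of_ne_zero fun h => hi (h ▸ dvd_zero _)
  have hk := placeValue_pos hn k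
  rw [trailingZeros_eq_iff hn (Nat.mul_pos hi₀ hk), placeValue_succ, Nat.mul_dvd_mul_iff_right hk]
  exact ⟨dvd_mul_left _ _, hi⟩

lemma trailingZeros_placeValue (hn : ∀ k, 2 ≤ n k) (k : ℕ) :
    trailingZeros n (placeValue n k) = k := by
  simpa only [one_mul] using
    trailingZeros_mul_placeValue hn (Nat.not_dvd_of_pos_of_lt one_pos (hn k))

lemma trailingZeros_add_of_dvd (hn : ∀ k, 2 ≤ n k) {i s k : ℕ} (hi : 0 < i)
    (hk : trailingZeros n i < k) (hs : placeValue n k ∣ s) :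
    trailingZeros n (s + i) = trailingZeros n i := by
  have hdvd : ∀ l ≤ k, placeValue n l ∣ s + i ↔ placeValue n l ∣ i := fun l hl =>
    (Nat.dvd_add_iff_right ((placeValue_dvd_placeValue hl).trans hs)).symm
  rw [trailingZeros_eq_iff hn (Nat.add_pos_right s hi), hdvd _ hk.le, hdvd _ hk]
  exact (trailingZeros_eq_iff hn hi).1 rfl

end MixedRadix

section Block

variable {A : Type*}

lemma intercalate_concat (s w : List A) {l : List (List A)} (hl : l ≠ []) :
    List.intercalate s (l ++ [w]) = List.intercalate s l ++ (s ++ w) := by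
  induction l with
  | nil => contradiction
  | cons u l ih =>
    rcases eq_or_ne l [] with rfl | hl'
    · simp
    · rw [List.cons_append, List.intercalate_cons_of_ne_nil (by simp), ih hl',
        List.intercalate_cons_of_ne_nil hl']
      simp only [List.append_assoc]

lemma intercalate_replicate_map_Ico {f : ℕ → A} {x : A} {q m : ℕ} (hq : 0 < q)
    (hper : ∀ i < m, ∀ j, 0 < j → j < q → f (i * q + j) = f j)
    (hsep : ∀ i, 0 < i → i < m → f (i * q) = x) :
    List.intercalate [x] (List.replicate m ((List.Ico 1 q).map f)) =
      (List.Ico 1 (m * q)).map f := by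
  induction m with
  | zero => simp
  | succ m ih =>
    rcases m.eq_zero_or_pos with rfl | hm
    · simp
    · have hmq : 0 < m * q := Nat.mul_pos hm hq
      have hcopy : (List.Ico 1 q).map f = (List.Ico (m * q + 1) ((m + 1) * q)).map f := by
        rw [add_one_mul, add_comm _ 1, add_comm _ q, ← List.Ico.map_add, List.map_map]
        refine List.map_congr_left fun j hj => ?_
        obtain ⟨hj₁, hjq⟩ := List.Ico.mem.1 hj
        exact (hper m m.lt_succ_self j hj₁ hjq).symm
      calc List.intercalate [x] (List.replicate (m + 1) ((List.Ico 1 q).map f))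
          = List.intercalate [x] (List.replicate m ((List.Ico 1 q).map f)) ++
              x :: (List.Ico 1 q).map f := by
            rw [List.replicate_succ', intercalate_concat _ _ (by simpa using hm.ne'),
              List.singleton_append]
        _ = (List.Ico 1 (m * q)).map f ++
              f (m * q) :: (List.Ico (m * q + 1) ((m + 1) * q)).map f := by
            rw [ih (fun i hi => hper i (hi.trans m.lt_succ_self))
              (fun i hi₀ hi => hsep i hi₀ (hi.trans m.lt_succ_self)),
              hsep m hm m.lt_succ_self, hcopy]
        _ = (List.Ico 1 (m * q)).map f ++ (List.Ico (m * q) ((m + 1) * q)).map f := by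
            rw [List.Ico.eq_cons (Nat.mul_lt_mul_of_pos_right m.lt_succ_self hq), List.map_cons]
        _ = (List.Ico 1 ((m + 1) * q)).map f := by
            rw [← List.map_append, List.Ico.append_consecutive hmq
              (Nat.mul_le_mul_right q m.le_succ)]

variable (a : ℕ → A) {n : ℕ → ℕ}

lemma toeplitzBlock_eq_map_Ico (hn : ∀ k, 2 ≤ n k) (k : ℕ) :
    ToeplitzBlock a n k =
      (List.Ico 1 (placeValue n (k + 1))).map fun i => a (trailingZeros n i) := by
  induction k with
  | zero =>
    refine (List.eq_replicate_iff.2 ⟨?_, fun b hb => ?_⟩).symm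
    · simp only [List.length_map, List.Ico.length, placeValue_succ, placeValue_zero, mul_one]
    · obtain ⟨i, hi, rfl⟩ := List.mem_map.1 hb
      obtain ⟨hi₁, hi⟩ := List.Ico.mem.1 hi
      exact congrArg a (Nat.lt_one_iff.1 (trailingZeros_lt_of_lt_placeValue hn hi₁ hi))
  | succ k ih =>
    rw [ToeplitzBlock, ih, placeValue_succ (k + 1)]
    refine intercalate_replicate_map_Ico (placeValue_pos hn _) (fun i _ j hj₀ hj => ?_)
      fun i hi₀ hi => ?_
    · rw [trailingZeros_add_of_dvd hn hj₀ (trailingZeros_lt_of_lt_placeValue hn hj₀ hj)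
        (dvd_mul_left _ i)]
    · rw [trailingZeros_mul_placeValue hn (Nat.not_dvd_of_pos_of_lt hi₀ hi)]

lemma toeplitzBlock_eq_map_range (hn : ∀ k, 2 ≤ n k) (k : ℕ) :
    ToeplitzBlock a n k = (List.range (placeValue n (k + 1) - 1)).map (toeplitzWord a n) := by
  have hIco : List.Ico 1 (placeValue n (k + 1)) =
      (List.range (placeValue n (k + 1) - 1)).map (1 + ·) := by
    rw [← List.Ico.zero_bot, List.Ico.map_add, zero_add,
      Nat.sub_add_cancel (placeValue_pos hn (k + 1))]
  rw [toeplitzBlock_eq_map_Ico a hn, hIco, List.map_map]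
  exact List.map_congr_left fun j _ => by rw [Function.comp_apply, add_comm, toeplitzWord]

variable {a}

lemma eq_toeplitzWord (hn : ∀ k, 2 ≤ n k) {ϖ : ℕ → A}
    (hϖ : ∀ k, ToeplitzBlock a n k = (List.range (ToeplitzBlock a n k).length).map ϖ) :
    ϖ = toeplitzWord a n := by
  funext j
  have hlen : (ToeplitzBlock a n j).length = placeValue n (j + 1) - 1 := by
    rw [toeplitzBlock_eq_map_range a hn, List.length_map, List.length_range]
  have hmap := (hϖ j).symm.trans (toeplitzBlock_eq_map_range a hn j)
  rw [hlen] at hmap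
  exact List.map_inj_left.1 hmap j
    (List.mem_range.2 (Nat.lt_sub_of_add_lt (lt_placeValue hn (j + 1))))

end Block

section Periodic

variable {A : Type*} {a : ℕ → A} {n : ℕ → ℕ}

lemma periodic_toeplitzWord_iff {p : ℕ} :
    Function.Periodic (toeplitzWord a n) p ↔
      ∀ i, 0 < i → a (trailingZeros n (i + p)) = a (trailingZeros n i) := by
  constructor
  · intro hper i hi
    obtain ⟨j, rfl⟩ := Nat.exists_eq_add_one.2 hi
    rw [add_right_comm]
    exact hper j
  · intro h j
    rw [toeplitzWord, add_right_comm]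
    exact h (j + 1) j.succ_pos

lemma eq_of_periodic_toeplitzWord (hn : ∀ k, 2 ≤ n k) {p m : ℕ} (hp : 0 < p)
    (hper : Function.Periodic (toeplitzWord a n) p) (hm : trailingZeros n p < m) :
    a m = a (trailingZeros n p) :=
  calc a m = a (trailingZeros n (placeValue n m)) := by rw [trailingZeros_placeValue hn]
    _ = a (trailingZeros n (placeValue n m + p)) :=
      (periodic_toeplitzWord_iff.1 hper _ (placeValue_pos hn m)).symm
    _ = a (trailingZeros n p) := by rw [trailingZeros_add_of_dvd hn hp hm dvd_rfl]

lemma periodic_toeplitzWord_placeValue (hn : ∀ k, 2 ≤ n k) {K : ℕ} (hK : ∀ m, K ≤ m → a m = a K) :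
    Function.Periodic (toeplitzWord a n) (placeValue n K) := by
  refine periodic_toeplitzWord_iff.2 fun i hi => ?_
  rcases lt_or_ge (trailingZeros n i) K with hiK | hiK
  · rw [add_comm, trailingZeros_add_of_dvd hn hi hiK dvd_rfl]
  · have hsum : K ≤ trailingZeros n (i + placeValue n K) :=
      (le_trailingZeros_iff hn (Nat.add_pos_left hi _)).2
        (((le_trailingZeros_iff hn hi).1 hiK).add dvd_rfl)
    rw [hK _ hsum, hK _ hiK]

lemma exists_periodic_toeplitzWord_iff (hn : ∀ k, 2 ≤ n k) :
    (∃ p, 1 ≤ p ∧ Function.Periodic (toeplitzWord a n) p) ↔ EventuallyConst a atTop := by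
  constructor
  · rintro ⟨p, hp, hper⟩
    have heventually : a =ᶠ[atTop] fun _ => a (trailingZeros n p) :=
      (eventually_gt_atTop _).mono fun _ hm => eq_of_periodic_toeplitzWord hn hp hper hm
    exact heventually.eventuallyConst_iff.2 (.const _)
  · intro hconst
    obtain ⟨K, hK⟩ := eventuallyConst_atTop.1 hconst
    exact ⟨placeValue n K, placeValue_pos hn K, periodic_toeplitzWord_placeValue hn hK⟩

end Periodic

section EventualAlphabet

variable {A : Type*} {a : ℕ → A}

lemma mem_aev_iff_frequently {x : A} : x ∈ Aev a ↔ ∃ᶠ m in atTop, a m = x := by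
  simp only [Aev, Ak, Set.mem_iInter, Set.mem_ofPred_eq, frequently_atTop]

lemma eventually_mem_aev [Finite A] (a : ℕ → A) : ∀ᶠ m in atTop, a m ∈ Aev a := by
  have hne : ∀ᶠ m in atTop, ∀ x, x ∉ Aev a → a m ≠ x :=
    eventually_all.2 fun x => eventually_imp_distrib_left.2 fun hx =>
      not_frequently.1 (mt mem_aev_iff_frequently.2 hx)
  exact hne.mono fun m hm => by_contra fun h => hm _ h rfl

lemma aev_eq_singleton_of_eventually_eq {c : A} (hc : ∀ᶠ m in atTop, a m = c) : Aev a = {c} := by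
  ext x
  rw [mem_aev_iff_frequently, Set.mem_singleton_iff]
  constructor
  · intro hx
    obtain ⟨m, hmx, hmc⟩ := (hx.and_eventually hc).exists
    exact hmx.symm.trans hmc
  · rintro rfl
    exact hc.frequently

lemma ncard_aev_eq_one_iff [Finite A] : (Aev a).ncard = 1 ↔ EventuallyConst a atTop := by
  have : Nonempty A := ⟨a 0⟩
  rw [Set.ncard_eq_one, eventuallyConst_iff_exists_eventuallyEq]
  refine exists_congr fun c => ⟨fun hc => ?_, aev_eq_singleton_of_eventually_eq⟩
  exact (eventually_mem_aev a).mono fun m hm => Set.mem_singleton_iff.1 (hc ▸ hm)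

end EventualAlphabet

/-- the one-sided infinite word `ϖ` having every block `p k` as a
prefix is periodic iff the eventual alphabet is a singleton. -/
theorem stmt0 {A : Type*} [Fintype A] [Nonempty A]
    (a : ℕ → A) (n : ℕ → ℕ) (hn : ∀ k, 2 ≤ n k)
    (ϖ : ℕ → A)
    (hϖ : ∀ k, ToeplitzBlock a n k = (List.range (ToeplitzBlock a n k).length).map ϖ) :
    (∃ p, 1 ≤ p ∧ ∀ j, ϖ (j + p) = ϖ j) ↔ (Aev a).ncard = 1 := by
  rw [eq_toeplitzWord hn hϖ, ncard_aev_eq_one_iff]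
  exact exists_periodic_toeplitzWord_iff hn
end

section
/- For every k ≥ 0 the complexity function satisfies the upper bound C(|p_k| + 1) ≤ (#A_k − 1)·(|p_k| + 1) + 𝟙_{A_{k+1}}(a_k)·(|p_{k−1}| + 1). -/
/-!
Filling the holes of `p ? p ? ⋯ ? p` with the letters of a word `w` is an associative operation
`toeplitzFill p w` on words, for which `p_{k+1} = toeplitzFill p_k (a_{k+1} ^ (n_{k+1} - 1))`.
By associativity every later block is a filling of `p = p_k` by a word over `A_{k+1}`, so a factor
of length `q = |p_k| + 1` sees exactly one hole, filled by some `x ∈ A_{k+1}`, and is a rotation of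
the word `p x`.

A word that is fixed by the rotation by `d > 0` has at most `d` rotations. For `x ≠ a_k` take
`d = q`. For `x = a_k` take `d = |p_{k-1}| + 1`, since `p_k a_k` is a power of `p_{k-1} a_k`.
-/

open Filter

open scoped List

section Rotations

variable {A : Type*} {w : List A} {d : ℕ}

theorem rotate_mod_of_rotate_eq_self (h : w.rotate d = w) (i : ℕ) :
    w.rotate (i % d) = w.rotate i :=
  Function.Periodic.map_mod_nat (fun j => by rw [add_comm, ← List.rotate_rotate, h]) i

theorem encard_setOf_isRotated_le {ι : Type*} {S : Set ι} {f : ι → List A} (hd : 0 < d)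
    (hf : ∀ x ∈ S, (f x).rotate d = f x) :
    {u | ∃ x ∈ S, u ~r f x}.encard ≤ S.encard * d := by
  have hsub : {u | ∃ x ∈ S, u ~r f x} ⊆
      (fun z : ι × ℕ => (f z.1).rotate z.2) '' (S ×ˢ Set.Iio d) := by
    rintro u ⟨x, hx, hu⟩
    obtain ⟨i, rfl⟩ := hu.symm
    exact ⟨(x, i % d), ⟨hx, Nat.mod_lt i hd⟩, rotate_mod_of_rotate_eq_self (hf x hx) i⟩
  calc _ ≤ (S ×ˢ Set.Iio d).encard := (Set.encard_le_encard hsub).trans (Set.encard_image_le _ _)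
    _ = S.encard * d := by rw [Set.encard_prod, ← (Set.finite_Iio d).cast_ncard_eq]; simp

end Rotations

/-- The word `p x₁ p x₂ ⋯ x_m p` obtained by filling the holes of `p ? p ? ⋯ ? p` with the letters
of `x₁ ⋯ x_m`; the blocks of a simple Toeplitz subshift arise by iterating this operation. -/
def toeplitzFill {A : Type*} (p : List A) : List A → List A
  | [] => p
  | x :: xs => p ++ x :: toeplitzFill p xs

section Fill

variable {A : Type*}

theorem toeplitzFill_append_cons (p xs ys : List A) (x : A) :
    toeplitzFill p (xs ++ x :: ys) = toeplitzFill p xs ++ x :: toeplitzFill p ys := by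
  induction xs with
  | nil => rfl
  | cons y xs ih => simp [toeplitzFill, ih]

theorem toeplitzFill_assoc (p xs ys : List A) :
    toeplitzFill (toeplitzFill p xs) ys = toeplitzFill p (toeplitzFill xs ys) := by
  induction ys with
  | nil => rfl
  | cons y ys ih => rw [toeplitzFill, ih, toeplitzFill, toeplitzFill_append_cons]

theorem mem_or_mem_of_mem_toeplitzFill {p xs : List A} {x : A} (hx : x ∈ toeplitzFill p xs) :
    x ∈ p ∨ x ∈ xs := by
  induction xs with
  | nil => exact Or.inl hx
  | cons y ys ih => simp only [toeplitzFill, List.mem_append, List.mem_cons] at hx ⊢; tauto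

theorem prefix_toeplitzFill (p xs : List A) : p <+: toeplitzFill p xs := by
  cases xs with
  | nil => exact List.prefix_rfl
  | cons x xs => exact List.prefix_append _ _

theorem intercalate_replicate_succ (p : List A) (c : A) (N : ℕ) :
    List.intercalate [c] (List.replicate (N + 1) p) = toeplitzFill p (List.replicate N c) := by
  induction N with
  | zero => simp [toeplitzFill]
  | succ N ih => simp [List.replicate_succ (n := N), toeplitzFill, ← ih, List.replicate_succ]

theorem rotate_toeplitzFill_replicate_append (p : List A) (c : A) (N : ℕ) :
    (toeplitzFill p (List.replicate N c) ++ [c]).rotate (p.length + 1) =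
      toeplitzFill p (List.replicate N c) ++ [c] := by
  have hlen : p.length + 1 = (p ++ [c]).length := by simp
  cases N with
  | zero => rw [hlen]; exact List.rotate_length _
  | succ N =>
    have hfront : toeplitzFill p (List.replicate (N + 1) c) ++ [c] =
        (p ++ [c]) ++ (toeplitzFill p (List.replicate N c) ++ [c]) := by
      simp [List.replicate_succ, toeplitzFill]
    have hback : toeplitzFill p (List.replicate (N + 1) c) ++ [c] =
        (toeplitzFill p (List.replicate N c) ++ [c]) ++ (p ++ [c]) := by
      simp [List.replicate_succ', toeplitzFill_append_cons, toeplitzFill]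
    conv_lhs => rw [hfront, hlen, List.rotate_append_length_eq, ← hback]

theorem isRotated_of_append_eq {s s' t u v : List A} {x : A} (h : u ++ t = s' ++ x :: (s ++ v))
    (hlen : u.length = (s ++ s').length + 1) : u ~r s ++ s' ++ [x] := by
  have hu : u = (s' ++ [x]) ++ s := by
    refine List.append_inj_left (t₁ := t) (t₂ := v) (by simp [h]) ?_
    simp only [hlen, List.length_append, List.length_singleton]
    omega
  rw [hu, List.append_assoc s]
  exact List.isRotated_append

theorem exists_isRotated_of_infix_toeplitzFill {p xs u : List A} (hu : u <:+: toeplitzFill p xs)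
    (hlen : u.length = p.length + 1) : ∃ x ∈ xs, u ~r p ++ [x] := by
  induction xs with
  | nil => exact absurd (hlen ▸ hu.length_le) (Nat.not_succ_le_self _)
  | cons x xs ih =>
    obtain ⟨s, t, hst⟩ := hu
    obtain ⟨v, hv⟩ := prefix_toeplitzFill p xs
    rw [toeplitzFill, List.append_assoc, List.append_eq_append_iff] at hst
    rcases hst with ⟨s', rfl, hut⟩ | ⟨s', rfl, hut⟩
    · rw [← hv, List.append_assoc s] at hut
      exact ⟨x, List.mem_cons_self, isRotated_of_append_eq hut hlen⟩
    · rcases List.cons_eq_append_iff.mp hut with ⟨-, hut'⟩ | ⟨s'', -, hut'⟩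
      · rw [← hv] at hut'
        have hrot := isRotated_of_append_eq (s' := []) hut' (by simpa using hlen)
        exact ⟨x, List.mem_cons_self, by simpa using hrot⟩
      · obtain ⟨y, hy, hrot⟩ := ih ⟨s'', t, by rw [hut', List.append_assoc]⟩
        exact ⟨y, List.mem_cons_of_mem x hy, hrot⟩

end Fill

theorem ak_antitone {A : Type*} (a : ℕ → A) : Antitone (Ak a) :=
  fun _ _ hkl _ ⟨j, hj, hx⟩ => ⟨j, hkl.trans hj, hx⟩

section Blocks

variable {A : Type*} (a : ℕ → A) {n : ℕ → ℕ} (hn : ∀ k, n k ≠ 0)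

include hn

theorem toeplitzBlock_succ (k : ℕ) :
    ToeplitzBlock a n (k + 1) =
      toeplitzFill (ToeplitzBlock a n k) (List.replicate (n (k + 1) - 1) (a (k + 1))) := by
  rw [← intercalate_replicate_succ, Nat.sub_one_add_one (hn (k + 1)), ToeplitzBlock]

theorem toeplitzBlock_add_succ (k m : ℕ) :
    ToeplitzBlock a n (k + 1 + m) = toeplitzFill (ToeplitzBlock a n k)
      (ToeplitzBlock (fun i => a (k + 1 + i)) (fun i => n (k + 1 + i)) m) := by
  induction m with
  | zero => exact toeplitzBlock_succ a hn k
  | succ m ih =>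
    rw [← add_assoc, toeplitzBlock_succ a hn, ih, toeplitzFill_assoc,
      toeplitzBlock_succ _ (fun i => hn (k + 1 + i))]
    rfl

theorem mem_range_of_mem_toeplitzBlock {m : ℕ} {x : A} (hx : x ∈ ToeplitzBlock a n m) :
    x ∈ Set.range a := by
  induction m with
  | zero => exact ⟨0, (List.eq_of_mem_replicate hx).symm⟩
  | succ m ih =>
    rw [toeplitzBlock_succ a hn] at hx
    rcases mem_or_mem_of_mem_toeplitzFill hx with hx | hx
    · exact ih hx
    · exact ⟨m + 1, (List.eq_of_mem_replicate hx).symm⟩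

theorem exists_isRotated_of_mem_toeplitzLang {k : ℕ} {u : List A} (hu : u ∈ ToeplitzLang a n)
    (hlen : u.length = (ToeplitzBlock a n k).length + 1) :
    ∃ x ∈ Ak a (k + 1), u ~r ToeplitzBlock a n k ++ [x] := by
  obtain ⟨m, hm⟩ := hu
  have hprefix : ToeplitzBlock a n m <+: ToeplitzBlock a n (k + 1 + m) := by
    rw [show k + 1 + m = m + 1 + k by omega, toeplitzBlock_add_succ a hn]
    exact prefix_toeplitzFill _ _
  have hinfix := hm.trans hprefix.isInfix
  rw [toeplitzBlock_add_succ a hn] at hinfix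
  obtain ⟨x, hx, hrot⟩ := exists_isRotated_of_infix_toeplitzFill hinfix hlen
  obtain ⟨i, rfl⟩ := mem_range_of_mem_toeplitzBlock _ (fun i => hn (k + 1 + i)) hx
  exact ⟨a (k + 1 + i), ⟨k + 1 + i, by omega, rfl⟩, hrot⟩

theorem rotate_toeplitzBlock_append (k : ℕ) :
    (ToeplitzBlock a n k ++ [a k]).rotate (lenPrev a n k + 1) = ToeplitzBlock a n k ++ [a k] := by
  cases k with
  | zero =>
    rw [ToeplitzBlock, ← List.replicate_succ']
    exact List.rotate_replicate _ _ _
  | succ k =>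
    rw [toeplitzBlock_succ a hn]
    exact rotate_toeplitzFill_replicate_append _ _ _

theorem encard_toeplitzLang_length_le (k : ℕ) :
    {u | u ∈ ToeplitzLang a n ∧ u.length = (ToeplitzBlock a n k).length + 1}.encard ≤
      (Ak a (k + 1) \ {a k}).encard * ((ToeplitzBlock a n k).length + 1 : ℕ) +
        (Ak a (k + 1) ∩ {a k}).encard * (lenPrev a n k + 1 : ℕ) := by
  set p := ToeplitzBlock a n k
  have hsub : {u | u ∈ ToeplitzLang a n ∧ u.length = p.length + 1} ⊆
      {u | ∃ x ∈ Ak a (k + 1) \ {a k}, u ~r p ++ [x]} ∪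
        {u | ∃ x ∈ Ak a (k + 1) ∩ {a k}, u ~r p ++ [x]} := by
    rintro u ⟨hu, hlen⟩
    obtain ⟨x, hx, hrot⟩ := exists_isRotated_of_mem_toeplitzLang a hn hu hlen
    by_cases hxk : x = a k
    · exact Or.inr ⟨x, ⟨hx, hxk⟩, hrot⟩
    · exact Or.inl ⟨x, ⟨hx, hxk⟩, hrot⟩
  refine (Set.encard_le_encard hsub).trans ((Set.encard_union_le _ _).trans (add_le_add ?_ ?_))
  · refine encard_setOf_isRotated_le (Nat.succ_pos _) fun x _ => ?_
    simpa using List.rotate_length (p ++ [x])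
  · refine encard_setOf_isRotated_le (Nat.succ_pos _) ?_
    rintro _ ⟨-, rfl⟩
    exact rotate_toeplitzBlock_append a hn k

theorem cmpl_length_add_one_le {k : ℕ} (hfin : (Ak a (k + 1)).Finite) :
    cmpl a n ((ToeplitzBlock a n k).length + 1) ≤
      (Ak a (k + 1) \ {a k}).ncard * ((ToeplitzBlock a n k).length + 1) +
        (Ak a (k + 1) ∩ {a k}).ncard * (lenPrev a n k + 1) := by
  have h := encard_toeplitzLang_length_le a hn k
  rw [← hfin.sdiff.cast_ncard_eq, ← (hfin.inter_of_left {a k}).cast_ncard_eq] at h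
  exact (Set.encard_le_coe_iff_finite_ncard_le.mp (mod_cast h)).2

end Blocks

theorem stmt2_general {A : Type*} (a : ℕ → A) (n : ℕ → ℕ) (hn : ∀ k, n k ≠ 0) (k : ℕ)
    [Decidable (a k ∈ Ak a (k + 1))] (hfin : (Ak a k).Finite) :
    (cmpl a n ((ToeplitzBlock a n k).length + 1) : ℤ) ≤
      (((Ak a k).ncard : ℤ) - 1) * (((ToeplitzBlock a n k).length : ℤ) + 1) +
        (if a k ∈ Ak a (k + 1) then 1 else 0) * ((lenPrev a n k : ℤ) + 1) := by
  have hsub : Ak a (k + 1) ⊆ Ak a k := ak_antitone a k.le_succ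
  have hcmpl := cmpl_length_add_one_le a hn (hfin.subset hsub)
  have hother : (Ak a (k + 1) \ {a k}).ncard ≤ (Ak a k).ncard - 1 := by
    rw [← Set.ncard_sdiff_singleton_of_mem (show a k ∈ Ak a k from ⟨k, le_rfl, rfl⟩)]
    exact Set.ncard_le_ncard (Set.sdiff_subset_sdiff_left hsub) hfin.sdiff
  have hself : (Ak a (k + 1) ∩ {a k}).ncard = if a k ∈ Ak a (k + 1) then 1 else 0 := by
    split_ifs with h <;> simp [h]
  have hpos : 1 ≤ (Ak a k).ncard := (Set.ncard_pos hfin).mpr ⟨a k, k, le_rfl, rfl⟩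
  rw [hself] at hcmpl
  grw [hother] at hcmpl
  zify [hpos] at hcmpl
  exact hcmpl

/- STATEMENT 2: upper bound for the complexity at word length `|p k| + 1`. -/
open Classical in
theorem stmt2 {A : Type*} [Fintype A] [Nonempty A]
    (a : ℕ → A) (n : ℕ → ℕ) (hn : ∀ k, 2 ≤ n k) (ha : ∀ k, a k ≠ a (k + 1))
    (hAev : 2 ≤ (Aev a).ncard) (k : ℕ) :
    (cmpl a n ((ToeplitzBlock a n k).length + 1) : ℤ) ≤
      (((Ak a k).ncard : ℤ) - 1) * (((ToeplitzBlock a n k).length : ℤ) + 1) +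
        (if a k ∈ Ak a (k + 1) then 1 else 0) * ((lenPrev a n k : ℤ) + 1) := by
  exact stmt2_general a n (fun j => (two_pos.trans_le (hn j)).ne') k (Set.toFinite _)
end

section
/- For every k ≥ 0 and every L with 0 ≤ L ≤ |p_k| − |p_{k−1}| − 1, the growth of the complexity function satisfies C(L+1) − C(L) ≥ #A_k − 1. -/
/-!
Write `p (-1)` for the empty word and `q k` for `p k` without its last `|p (k - 1)| + 1` letters.
Then `p k = p (k - 1) a_k (q k) = (q k) a_k p (k - 1)`, so `q k` is a suffix of `p k` and can be
followed by `a_k` in the language. Since `n (k + 1) ≥ 2`, the block `p k` is in turn a suffix of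
`q (k + 1)`. Hence a suffix of `q k` is a suffix of every `q j` with `j ≥ k`, and can be followed
by every letter of `A_k`.

By the same chain of suffixes every word of the language can be prolonged to the right, so deleting
the last letter maps the words of length `L + 1` onto those of length `L`. The fibre over the
suffix of `q k` of length `L` has at least `#A_k` elements, and every other fibre at least one.
-/

open Filter

namespace SimpleToeplitz

variable {A : Type*}

section Words

/-- The right extensions of a word `u` in a set of words `X`: the letters `c` such that `u c` is
again in `X`. A word with at least two of them is called right special. -/
def rightExtensions (X : Set (List A)) (u : List A) : Set A := {c | u ++ [c] ∈ X}

/-- A set of words is right extendable if each of its words can be prolonged by a letter. This is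
the property of a language that bounds its complexity growth from below. -/
def IsRightExtendable (X : Set (List A)) : Prop := ∀ w ∈ X, (rightExtensions X w).Nonempty

theorem IsRightExtendable.encard_add_encard_rightExtensions_le {X : Set (List A)}
    (hX : IsRightExtendable X) (u : List A) :
    {w ∈ X | w.length = u.length}.encard + (rightExtensions X u).encard ≤
      {w ∈ X | w.length = u.length + 1}.encard + 1 := by
  set S := {w ∈ X | w.length = u.length}
  set T := {w ∈ X | w.length = u.length + 1}
  set U := (fun c ↦ u ++ [c]) '' rightExtensions X u
  have encard_U : U.encard = (rightExtensions X u).encard :=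
    Function.Injective.encard_image (fun _ _ h ↦ by simpa using h) _
  have U_subset : U ⊆ T := by
    rintro _ ⟨c, hc, rfl⟩
    exact ⟨hc, by simp⟩
  have S_subset : S \ {u} ⊆ List.dropLast '' (T \ U) := by
    rintro w ⟨⟨hwX, hwu⟩, hne⟩
    obtain ⟨c, hc⟩ := hX w hwX
    refine ⟨w ++ [c], ⟨⟨hc, by simp [hwu]⟩, ?_⟩, List.dropLast_concat⟩
    rintro ⟨d, -, h⟩
    exact hne (List.append_inj_left' h rfl).symm
  have encard_S_le : (S \ {u}).encard ≤ (T \ U).encard :=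
    (Set.encard_le_encard S_subset).trans (Set.encard_image_le _ _)
  calc S.encard + (rightExtensions X u).encard
      ≤ (S \ {u}).encard + 1 + U.encard := by
        rw [encard_U]
        gcongr
        exact tsub_le_iff_right.mp (Set.encard_tsub_one_le_encard_sdiff_singleton S u)
    _ ≤ (T \ U).encard + 1 + U.encard := by gcongr
    _ = T.encard + 1 := by
        rw [add_right_comm, Set.encard_sdiff_add_encard_of_subset U_subset]

lemma exists_append_singleton_isInfix {u v : List A} (h : u <:+: v) (c : A) :
    ∃ d, u ++ [d] <:+: v ++ [c] := by
  obtain ⟨s, t, rfl⟩ := h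
  obtain ⟨d, t', ht⟩ := List.exists_cons_of_ne_nil (List.concat_ne_nil c t)
  exact ⟨d, s, t', by simp [← ht]⟩

lemma intercalate_concat_of_ne_nil (s p : List A) {l : List (List A)} (hl : l ≠ []) :
    s.intercalate (l ++ [p]) = s.intercalate l ++ s ++ p := by
  induction l with
  | nil => contradiction
  | cons q l ih =>
    rcases eq_or_ne l [] with rfl | hne
    · simp
    · simp [List.intercalate_cons_of_ne_nil, hne, ih hne]

lemma intercalate_replicate_nil (c : A) (m : ℕ) :
    [c].intercalate (List.replicate m []) = List.replicate (m - 1) c := by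
  induction m with
  | zero => rfl
  | succ m ih =>
    cases m with
    | zero => simp
    | succ m =>
      rw [List.replicate_succ, List.intercalate_cons_of_ne_nil (by simp), ih]
      rfl

end Words

section Blocks

variable (a : ℕ → A) (n : ℕ → ℕ)

/-- The block `p (k - 1)`, where `p (-1)` is the empty word. With this convention
`p 0`, too, consists of `n 0` copies of its predecessor separated by letters `a 0`. -/
def prevBlock : ℕ → List A
  | 0 => []
  | k + 1 => ToeplitzBlock a n k

/-- The block `p k` without its last `|p (k - 1)| + 1` letters, that is, `n k - 1` copies of
`p (k - 1)` separated by letters `a k`. It is both a prefix and a suffix of `p k`, and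
its own suffixes turn out to be prolonged by every letter of `A_k`. The description needs
`n k ≥ 2`, as the subtraction is truncated. -/
def blockBorder (k : ℕ) : List A :=
  [a k].intercalate (List.replicate (n k - 1) (prevBlock a n k))

lemma length_prevBlock (k : ℕ) : (prevBlock a n k).length = lenPrev a n k := by
  cases k <;> rfl

lemma toeplitzBlock_eq_intercalate (k : ℕ) :
    ToeplitzBlock a n k = [a k].intercalate (List.replicate (n k) (prevBlock a n k)) := by
  cases k with
  | zero => exact (intercalate_replicate_nil _ _).symm
  | succ k => rfl

variable {n} {k : ℕ}

lemma toeplitzBlock_eq_prevBlock_append_blockBorder (hk : 2 ≤ n k) :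
    ToeplitzBlock a n k = prevBlock a n k ++ [a k] ++ blockBorder a n k := by
  obtain ⟨m, hm⟩ := Nat.exists_eq_add_of_le' hk
  rw [toeplitzBlock_eq_intercalate, blockBorder, hm, List.replicate_succ,
    List.intercalate_cons_of_ne_nil (by simp)]
  rfl

lemma toeplitzBlock_eq_blockBorder_append_prevBlock (hk : 2 ≤ n k) :
    ToeplitzBlock a n k = blockBorder a n k ++ [a k] ++ prevBlock a n k := by
  obtain ⟨m, hm⟩ := Nat.exists_eq_add_of_le' hk
  rw [toeplitzBlock_eq_intercalate, blockBorder, hm, List.replicate_succ',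
    intercalate_concat_of_ne_nil _ _ (by simp)]
  rfl

lemma length_blockBorder_add_lenPrev (hk : 2 ≤ n k) :
    (blockBorder a n k).length + lenPrev a n k + 1 = (ToeplitzBlock a n k).length := by
  rw [toeplitzBlock_eq_blockBorder_append_prevBlock a hk, ← length_prevBlock]
  simp only [List.length_append, List.length_singleton]
  omega

lemma blockBorder_suffix_toeplitzBlock (hk : 2 ≤ n k) :
    blockBorder a n k <:+ ToeplitzBlock a n k := by
  rw [toeplitzBlock_eq_prevBlock_append_blockBorder a hk]
  exact List.suffix_append _ _

lemma prevBlock_suffix_blockBorder (hk : 2 ≤ n k) : prevBlock a n k <:+ blockBorder a n k := by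
  obtain ⟨m, hm⟩ := Nat.exists_eq_add_of_le' hk
  rw [blockBorder, hm, Nat.add_sub_assoc (by decide), List.replicate_succ']
  rcases eq_or_ne m 0 with rfl | hne
  · simp
  · rw [intercalate_concat_of_ne_nil _ _ (by simpa using hne)]
    exact List.suffix_append _ _

lemma toeplitzBlock_suffix_blockBorder_succ (hk : 2 ≤ n (k + 1)) :
    ToeplitzBlock a n k <:+ blockBorder a n (k + 1) :=
  prevBlock_suffix_blockBorder a hk

lemma blockBorder_suffix_blockBorder (hn : ∀ k, 2 ≤ n k) {i j : ℕ} (hij : i ≤ j) :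
    blockBorder a n i <:+ blockBorder a n j :=
  Nat.rel_of_forall_rel_succ_of_le (· <:+ ·) (fun k ↦
    (blockBorder_suffix_toeplitzBlock a (hn k)).trans
      (toeplitzBlock_suffix_blockBorder_succ a (hn (k + 1)))) hij

end Blocks

section Language

variable (a : ℕ → A) {n : ℕ → ℕ}

lemma mem_toeplitzLang_of_isInfix {u v : List A} (h : u <:+: v) (hv : v ∈ ToeplitzLang a n) :
    u ∈ ToeplitzLang a n :=
  hv.imp fun _ hk ↦ h.trans hk

lemma mem_rightExtensions_of_suffix_blockBorder {k : ℕ} (hk : 2 ≤ n k) {u : List A}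
    (hu : u <:+ blockBorder a n k) : a k ∈ rightExtensions (ToeplitzLang a n) u := by
  have concat_isSuffix : u ++ [a k] <:+ blockBorder a n k ++ [a k] :=
    List.suffix_append_self_iff.mpr hu
  have concat_isPrefix : blockBorder a n k ++ [a k] <+: ToeplitzBlock a n k := by
    rw [toeplitzBlock_eq_blockBorder_append_prevBlock a hk]
    exact List.prefix_append _ _
  exact ⟨k, concat_isSuffix.isInfix.trans concat_isPrefix.isInfix⟩

lemma Ak_subset_rightExtensions (hn : ∀ k, 2 ≤ n k) {k : ℕ} {u : List A}
    (hu : u <:+ blockBorder a n k) : Ak a k ⊆ rightExtensions (ToeplitzLang a n) u := by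
  rintro _ ⟨j, hkj, rfl⟩
  exact mem_rightExtensions_of_suffix_blockBorder a (hn j)
    (hu.trans (blockBorder_suffix_blockBorder a hn hkj))

lemma isRightExtendable_toeplitzLang (hn : ∀ k, 2 ≤ n k) :
    IsRightExtendable (ToeplitzLang a n) := by
  rintro w ⟨k, hw⟩
  obtain ⟨c, hc⟩ := exists_append_singleton_isInfix hw (a (k + 1))
  have concat_mem : a (k + 1) ∈ rightExtensions (ToeplitzLang a n) (ToeplitzBlock a n k) :=
    mem_rightExtensions_of_suffix_blockBorder a (hn (k + 1))
      (toeplitzBlock_suffix_blockBorder_succ a (hn (k + 1)))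
  exact ⟨c, mem_toeplitzLang_of_isInfix a hc concat_mem⟩

lemma cast_cmpl [Finite A] (n : ℕ → ℕ) (L : ℕ) :
    (cmpl a n L : ℕ∞) = {w ∈ ToeplitzLang a n | w.length = L}.encard :=
  ((List.finite_length_eq A L).subset fun _ hw ↦ hw.2).cast_ncard_eq

theorem cmpl_add_ncard_rightExtensions_le [Finite A] (hn : ∀ k, 2 ≤ n k) (u : List A) :
    cmpl a n u.length + (rightExtensions (ToeplitzLang a n) u).ncard ≤
      cmpl a n (u.length + 1) + 1 := by
  have growth := (isRightExtendable_toeplitzLang a hn).encard_add_encard_rightExtensions_le u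
  rw [← cast_cmpl, ← cast_cmpl, ← (Set.toFinite _).cast_ncard_eq] at growth
  exact_mod_cast growth

end Language

end SimpleToeplitz

open SimpleToeplitz in
theorem stmt3_general {A : Type*} [Finite A] (a : ℕ → A) (n : ℕ → ℕ) (hn : ∀ k, 2 ≤ n k)
    (k L : ℕ) (hL : L + lenPrev a n k + 1 ≤ (ToeplitzBlock a n k).length) :
    ((Ak a k).ncard : ℤ) - 1 ≤ (cmpl a n (L + 1) : ℤ) - (cmpl a n L : ℤ) := by
  have hLq : L ≤ (blockBorder a n k).length := by
    have := length_blockBorder_add_lenPrev a (hn k)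
    omega
  obtain ⟨u, hu, rfl⟩ : ∃ u, u <:+ blockBorder a n k ∧ u.length = L :=
    ⟨_, List.drop_suffix ((blockBorder a n k).length - L) _, by
      rw [List.length_drop, Nat.sub_sub_self hLq]⟩
  have hAk : (Ak a k).ncard ≤ (rightExtensions (ToeplitzLang a n) u).ncard :=
    Set.ncard_le_ncard (Ak_subset_rightExtensions a hn hu)
  have growth := cmpl_add_ncard_rightExtensions_le a hn u
  omega

/-- for `0 ≤ L ≤ |p k| - |p (k-1)| - 1` the complexity grows by at
least `#A k - 1`. -/
theorem stmt3 {A : Type*} [Fintype A] [Nonempty A]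
    (a : ℕ → A) (n : ℕ → ℕ) (hn : ∀ k, 2 ≤ n k) (ha : ∀ k, a k ≠ a (k + 1))
    (hAev : 2 ≤ (Aev a).ncard)
    (k L : ℕ) (hL : L + lenPrev a n k + 1 ≤ (ToeplitzBlock a n k).length) :
    ((Ak a k).ncard : ℤ) - 1 ≤ (cmpl a n (L + 1) : ℤ) - (cmpl a n L : ℤ) :=
  stmt3_general a n hn k L hL
end

section
/- The first values of the complexity function are: C(L) = (#A_0 − 1)·L + 1 for all 0 ≤ L ≤ |p_0|, and C(|p_0| + 1) = (#A_0 − 1)·(|p_0| + 1) + 𝟙_{A_1}(a_0). -/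
/-!
Every block `p j` with `j ≥ k` is a string of copies of `p k` separated by single letters of
`A (k + 1)`, so a word of length at most `|p k| + 1` in it meets at most one separator. Hence the
words of these lengths in the language are exactly the factors of the words `p k c p k` with
`c ∈ A (k + 1)`.

For `k = 0` the block is a power `x ^ m` of the letter `x = a 0`. A factor of length `L ≤ m + 1` of
`x ^ m c x ^ m` is `x ^ L` with one letter replaced by `c`, or `x ^ L` itself if `L ≤ m`. For
`c ≠ x` the place of the replacement and `c` can be read off the word, and
`A 1 \ {x} = A 0 \ {x}`. This gives `L * (#A 0 - 1)` words other than `x ^ L`, while `x ^ L` itself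
occurs always if `L ≤ m`, and exactly when `x ∈ A 1` if `L = m + 1`.
-/

open Filter

section SeparatedCopies

open List

variable {A : Type*} {p u v w : List A} {S : Set A} {c : A}

lemma append_infix_append {s t : List A} (hs : s <:+ v) (ht : t <+: w) : s ++ t <:+: v ++ w :=
  infix_append_iff.2 (.inr (.inr ⟨s, t, rfl, hs, ht⟩))

/-- The words `p c₁ p c₂ ⋯ cᵣ p` built from copies of the word `p` and separating letters `cᵢ ∈ S`;
blocks of a higher level have this form over a block of a lower level. The case `r = 0`, in which
the word is `p`, is included. -/
inductive SeparatedCopies (p : List A) (S : Set A) : List A → Prop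
  | single : SeparatedCopies p S p
  | append_cons {c : A} {w : List A} (hc : c ∈ S) (hw : SeparatedCopies p S w) :
      SeparatedCopies p S (p ++ c :: w)

namespace SeparatedCopies

lemma append (hv : SeparatedCopies p S v) (hc : c ∈ S) (hw : SeparatedCopies p S w) :
    SeparatedCopies p S (v ++ c :: w) := by
  induction hv with
  | single => exact append_cons hc hw
  | append_cons hd _ ih => simpa using append_cons hd ih

lemma intercalate_replicate (hw : SeparatedCopies p S w) (hc : c ∈ S) {N : ℕ} (hN : 0 < N) :
    SeparatedCopies p S (intercalate [c] (replicate N w)) := by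
  induction N, hN using Nat.le_induction with
  | base => simpa using hw
  | succ N hN ih =>
    rw [replicate_succ, intercalate_cons_of_ne_nil (by simpa using Nat.ne_of_gt hN)]
    simpa using hw.append hc ih

lemma isPrefix (hw : SeparatedCopies p S w) : p <+: w := by
  cases hw with
  | single => exact prefix_rfl
  | append_cons => exact prefix_append _ _

lemma isSuffix (hw : SeparatedCopies p S w) : p <:+ w := by
  induction hw with
  | single => exact suffix_rfl
  | append_cons _ _ ih => exact (ih.trans (suffix_cons _ _)).trans (suffix_append _ _)

lemma exists_infix_append_cons (hw : SeparatedCopies p S w) (hS : S.Nonempty) (hu : u <:+: w)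
    (hlen : u.length ≤ p.length + 1) : ∃ c ∈ S, u <:+: p ++ c :: p := by
  induction hw with
  | single =>
    obtain ⟨c, hc⟩ := hS
    exact ⟨c, hc, infix_append_of_infix_left hu⟩
  | @append_cons c w hc hw ih =>
    rw [List.append_cons, infix_append_iff] at hu
    rcases hu with hu | hu | ⟨l₁, l₂, rfl, h₁, h₂⟩
    · exact ⟨c, hc, by simpa using infix_append_of_infix_left (l₃ := p) hu⟩
    · exact ih hu
    · rcases eq_or_ne l₁ [] with rfl | hl₁
      · exact ih h₂.isInfix
      · -- `l₁` is nonempty, so `l₂` is not longer than `p` and cannot reach the next separator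
        have hl₁ : 0 < l₁.length := length_pos_of_ne_nil hl₁
        have hl₂ : l₂.length ≤ p.length := by
          rw [length_append] at hlen
          omega
        have h₂ : l₂ <+: p := prefix_of_prefix_length_le h₂ hw.isPrefix hl₂
        refine ⟨c, hc, ?_⟩
        rw [List.append_cons]
        exact append_infix_append h₁ h₂

end SeparatedCopies

end SeparatedCopies

section Blocks

open List

variable {A : Type*} (a : ℕ → A) {n : ℕ → ℕ} {j k : ℕ}

lemma Ak_nonempty (k : ℕ) : (Ak a k).Nonempty := ⟨a k, k, le_rfl, rfl⟩

lemma separatedCopies_toeplitzBlock (hn : ∀ i, 0 < n i) (hkj : k ≤ j) :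
    SeparatedCopies (ToeplitzBlock a n k) (Ak a (k + 1)) (ToeplitzBlock a n j) := by
  induction j, hkj using Nat.le_induction with
  | base => exact .single
  | succ j hkj ih => exact ih.intercalate_replicate ⟨j + 1, by omega, rfl⟩ (hn (j + 1))

lemma toeplitzBlock_append_cons_infix (hn : ∀ i, 2 ≤ n i) (hkj : k < j) :
    ToeplitzBlock a n k ++ a j :: ToeplitzBlock a n k <:+: ToeplitzBlock a n j := by
  obtain ⟨i, rfl⟩ : ∃ i, j = i + 1 := ⟨j - 1, by omega⟩
  obtain ⟨N, hN⟩ := Nat.exists_eq_add_of_le' (hn (i + 1))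
  have hpos : ∀ i, 0 < n i := fun i => two_pos.trans_le (hn i)
  have hcopies := separatedCopies_toeplitzBlock a hpos (Nat.le_of_lt_succ hkj)
  have htail := hcopies.intercalate_replicate (c := a (i + 1)) ⟨i + 1, hkj, rfl⟩ N.succ_pos
  rw [ToeplitzBlock.eq_2, hN, replicate_succ, intercalate_cons_of_ne_nil (by simp),
    ← append_cons]
  exact append_infix_append hcopies.isSuffix ((prefix_cons_inj _).2 htail.isPrefix)

lemma mem_toeplitzLang_iff (hn : ∀ i, 2 ≤ n i) {u : List A}
    (hu : u.length ≤ (ToeplitzBlock a n k).length + 1) :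
    u ∈ ToeplitzLang a n ↔
      ∃ c ∈ Ak a (k + 1), u <:+: ToeplitzBlock a n k ++ c :: ToeplitzBlock a n k := by
  constructor
  · rintro ⟨j, hj⟩
    have hpos : ∀ i, 0 < n i := fun i => two_pos.trans_le (hn i)
    have hmax := (separatedCopies_toeplitzBlock a hpos (le_max_left j k)).isPrefix.isInfix
    exact (separatedCopies_toeplitzBlock a hpos (le_max_right j k)).exists_infix_append_cons
      (Ak_nonempty a (k + 1)) (hj.trans hmax) hu
  · rintro ⟨_, ⟨j, hj, rfl⟩, hu⟩
    exact ⟨j, hu.trans (toeplitzBlock_append_cons_infix a hn hj)⟩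

end Blocks

section LetterReplacements

open List

variable {A : Type*} {x : A} {S : Set A} {L m : ℕ}

/-- The words obtained from `x ^ L` by replacing one letter by an element of `S`. Apart from
`x ^ L`, the short words of the language have this form; as `x ∈ S` is allowed, `x ^ L` itself may
be among them too. -/
def letterReplacements (x : A) (S : Set A) (L : ℕ) : Set (List A) :=
  Set.image2 (fun i c => (replicate L x).set i c) (Set.Iio L) S

lemma replicate_append_cons_replicate (x c : A) (i j : ℕ) :
    replicate i x ++ c :: replicate j x = (replicate (i + j + 1) x).set i c := by
  rw [add_assoc, replicate_add, set_append_right _ _ (by simp)]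
  simp [replicate_succ]

lemma infix_replicate_append_cons_iff {u : List A} {c : A} (hu : u.length ≤ m + 1) :
    u <:+: replicate m x ++ c :: replicate m x ↔
      (u.length ≤ m ∧ u = replicate u.length x) ∨
        ∃ i < u.length, u = (replicate u.length x).set i c := by
  constructor
  · rw [infix_append_iff, infix_cons_iff]
    rintro (h | (h | h) | ⟨l, r, rfl, hl, hr⟩)
    · exact .inl (infix_replicate_iff.1 h)
    · rcases prefix_cons_iff.1 h with rfl | ⟨r, rfl, hr⟩
      · exact .inl (by simp)
      · refine .inr ⟨0, by simp, ?_⟩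
        rw [(prefix_replicate_iff.1 hr).2]
        simp [replicate_succ]
    · exact .inl (infix_replicate_iff.1 h)
    · rcases prefix_cons_iff.1 hr with rfl | ⟨t, rfl, ht⟩
      · exact .inl (by simpa using suffix_replicate_iff.1 hl)
      · refine .inr ⟨l.length, by simp, ?_⟩
        rw [(suffix_replicate_iff.1 hl).2, (prefix_replicate_iff.1 ht).2,
          replicate_append_cons_replicate]
        simp
  · rintro (h | ⟨i, hi, h⟩)
    · exact infix_append_of_infix_left (infix_replicate_iff.2 h)
    · obtain ⟨j, hj⟩ := Nat.exists_eq_add_of_lt hi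
      rw [h, hj, ← replicate_append_cons_replicate]
      have hprefix : replicate j x <+: replicate m x :=
        prefix_replicate_iff.2 (by simp; omega)
      exact append_infix_append (suffix_replicate_iff.2 (by simp; omega))
        ((prefix_cons_inj _).2 hprefix)

lemma setOf_infix_replicate_append_cons_of_le (x : A) (hL : L ≤ m) (hS : S.Nonempty) :
    {u | (∃ c ∈ S, u <:+: replicate m x ++ c :: replicate m x) ∧ u.length = L} =
      insert (replicate L x) (letterReplacements x S L) := by
  ext u
  constructor
  · rintro ⟨⟨c, hc, hu⟩, rfl⟩
    rcases (infix_replicate_append_cons_iff (by omega)).1 hu with ⟨_, hu⟩ | ⟨i, hi, hu⟩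
    · exact .inl hu
    · exact .inr ⟨i, hi, c, hc, hu.symm⟩
  · rintro (rfl | ⟨i, hi, c, hc, rfl⟩)
    · obtain ⟨c, hc⟩ := hS
      exact ⟨⟨c, hc, (infix_replicate_append_cons_iff (by simp; omega)).2 (by simp [hL])⟩, by simp⟩
    · exact ⟨⟨c, hc, (infix_replicate_append_cons_iff (by simp; omega)).2
        (.inr ⟨i, by simpa using hi, by simp⟩)⟩, by simp⟩

lemma setOf_infix_replicate_append_cons_succ (x : A) (S : Set A) (m : ℕ) :
    {u | (∃ c ∈ S, u <:+: replicate m x ++ c :: replicate m x) ∧ u.length = m + 1} =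
      letterReplacements x S (m + 1) := by
  ext u
  constructor
  · rintro ⟨⟨c, hc, hu⟩, hlen⟩
    rcases (infix_replicate_append_cons_iff hlen.le).1 hu with ⟨hle, _⟩ | ⟨i, hi, hu⟩
    · omega
    · exact hlen ▸ ⟨i, hi, c, hc, hu.symm⟩
  · rintro ⟨i, hi, c, hc, rfl⟩
    exact ⟨⟨c, hc, (infix_replicate_append_cons_iff (by simp)).2
      (.inr ⟨i, by simpa using hi, by simp⟩)⟩, by simp⟩

lemma replicate_mem_letterReplacements_iff :
    replicate L x ∈ letterReplacements x S L ↔ L ≠ 0 ∧ x ∈ S := by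
  constructor
  · rintro ⟨i, hi, c, hc, h⟩
    have hcx : c = x := by
      simpa [Set.mem_Iio.1 hi] using congrArg (·[i]?) h
    exact ⟨Nat.ne_zero_of_lt hi, hcx ▸ hc⟩
  · rintro ⟨hL, hx⟩
    exact ⟨0, Nat.pos_of_ne_zero hL, x, hx, set_replicate_self⟩

lemma insert_replicate_letterReplacements_sdiff (x : A) (S : Set A) (L : ℕ) :
    insert (replicate L x) (letterReplacements x (S \ {x}) L) =
      insert (replicate L x) (letterReplacements x S L) := by
  refine Set.Subset.antisymm
    (Set.insert_subset_insert (Set.image2_subset_left Set.sdiff_subset)) ?_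
  rintro _ (rfl | ⟨i, hi, c, hc, rfl⟩)
  · exact .inl rfl
  · rcases eq_or_ne c x with rfl | hcx
    · exact .inl set_replicate_self
    · exact .inr ⟨i, hi, c, ⟨hc, hcx⟩, rfl⟩

lemma injOn_set_replicate (hx : x ∉ S) :
    Set.InjOn (fun q : ℕ × A => (replicate L x).set q.1 q.2) (Set.Iio L ×ˢ S) := by
  rintro ⟨i, c⟩ ⟨hi, hc⟩ ⟨j, d⟩ - h
  have hletter : c = if j = i then d else x := by
    have hget := congrArg (·[i]?) h
    simp only [getElem?_set, length_replicate, getElem?_replicate, Set.mem_Iio.1 hi,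
      if_true] at hget
    split_ifs at hget ⊢ <;> simpa using hget
  split_ifs at hletter with hji
  · rw [hji, hletter]
  · exact absurd (hletter ▸ hc) hx

lemma ncard_letterReplacements_of_notMem (hx : x ∉ S) (L : ℕ) :
    (letterReplacements x S L).ncard = L * S.ncard := by
  rw [letterReplacements, ← Set.image_prod, (injOn_set_replicate hx).ncard_image, Set.ncard_prod,
    Set.ncard_Iio_nat]

lemma ncard_insert_replicate_letterReplacements (x : A) (hS : S.Finite) (L : ℕ) :
    (insert (replicate L x) (letterReplacements x S L)).ncard = L * (S \ {x}).ncard + 1 := by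
  have hx : x ∉ S \ {x} := fun h => h.2 rfl
  have hfin : (letterReplacements x (S \ {x}) L).Finite := (Set.finite_Iio L).image2 _ hS.sdiff
  rw [← insert_replicate_letterReplacements_sdiff, Set.ncard_insert_of_notMem
    (fun h => hx (replicate_mem_letterReplacements_iff.1 h).2) hfin,
    ncard_letterReplacements_of_notMem hx]

open Classical in
lemma ncard_letterReplacements (x : A) (hS : S.Finite) (hL : L ≠ 0) :
    (letterReplacements x S L).ncard = L * (S \ {x}).ncard + if x ∈ S then 1 else 0 := by
  split_ifs with hx
  · rw [← ncard_insert_replicate_letterReplacements x hS,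
      Set.insert_eq_of_mem (replicate_mem_letterReplacements_iff.2 ⟨hL, hx⟩)]
  · rw [ncard_letterReplacements_of_notMem hx, Set.sdiff_singleton_eq_self hx, add_zero]

end LetterReplacements

section Complexity

variable {A : Type*} (a : ℕ → A) {n : ℕ → ℕ}

lemma Ak_eq_insert (k : ℕ) : Ak a k = insert (a k) (Ak a (k + 1)) := by
  ext c
  constructor
  · rintro ⟨j, hj, rfl⟩
    rcases hj.eq_or_lt with rfl | hj
    · exact .inl rfl
    · exact .inr ⟨j, hj, rfl⟩
  · rintro (rfl | ⟨j, hj, rfl⟩)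
    · exact ⟨k, le_rfl, rfl⟩
    · exact ⟨j, by omega, rfl⟩

lemma ncard_Ak_succ_sdiff_add_one (k : ℕ) (hfin : (Ak a k).Finite) :
    (Ak a (k + 1) \ {a k}).ncard + 1 = (Ak a k).ncard := by
  have hk : a k ∈ Ak a k := ⟨k, le_rfl, rfl⟩
  rw [← Set.ncard_sdiff_singleton_add_one hk hfin, Ak_eq_insert a k,
    Set.insert_sdiff_of_mem _ (Set.mem_singleton _)]

lemma cmpl_eq_ncard_infix (hn : ∀ i, 2 ≤ n i) {k L : ℕ}
    (hL : L ≤ (ToeplitzBlock a n k).length + 1) :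
    cmpl a n L = {u | (∃ c ∈ Ak a (k + 1),
      u <:+: ToeplitzBlock a n k ++ c :: ToeplitzBlock a n k) ∧ u.length = L}.ncard := by
  refine congrArg Set.ncard (Set.ext fun u => and_congr_left fun hu => ?_)
  exact mem_toeplitzLang_iff a hn (hu.trans_le hL)

lemma cmpl_of_le_length (hn : ∀ i, 2 ≤ n i) (hfin : (Ak a 1).Finite) {L : ℕ}
    (hL : L ≤ (ToeplitzBlock a n 0).length) :
    cmpl a n L = L * (Ak a 1 \ {a 0}).ncard + 1 := by
  rw [cmpl_eq_ncard_infix a hn (Nat.le_succ_of_le hL), ToeplitzBlock,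
    setOf_infix_replicate_append_cons_of_le _ (by simpa [ToeplitzBlock] using hL) (Ak_nonempty a 1),
    ncard_insert_replicate_letterReplacements _ hfin]

open Classical in
lemma cmpl_length_add_one (hn : ∀ i, 2 ≤ n i) (hfin : (Ak a 1).Finite) :
    cmpl a n ((ToeplitzBlock a n 0).length + 1) =
      ((ToeplitzBlock a n 0).length + 1) * (Ak a 1 \ {a 0}).ncard +
        if a 0 ∈ Ak a 1 then 1 else 0 := by
  rw [cmpl_eq_ncard_infix a hn le_rfl, ToeplitzBlock, List.length_replicate,
    setOf_infix_replicate_append_cons_succ, ncard_letterReplacements _ hfin (Nat.succ_ne_zero _)]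

end Complexity

open Classical in
theorem stmt7_general {A : Type*} (a : ℕ → A) (n : ℕ → ℕ) (hn : ∀ k, 2 ≤ n k)
    (hfin : (Ak a 0).Finite) :
    (∀ L : ℕ, L ≤ (ToeplitzBlock a n 0).length →
      (cmpl a n L : ℤ) = (((Ak a 0).ncard : ℤ) - 1) * (L : ℤ) + 1) ∧
    (cmpl a n ((ToeplitzBlock a n 0).length + 1) : ℤ) =
      (((Ak a 0).ncard : ℤ) - 1) * (((ToeplitzBlock a n 0).length : ℤ) + 1) +
        (if a 0 ∈ Ak a 1 then 1 else 0) := by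
  have hfin₁ : (Ak a 1).Finite := hfin.subset (Ak_eq_insert a 0 ▸ Set.subset_insert _ _)
  have hcard : ((Ak a 0).ncard : ℤ) - 1 = (Ak a 1 \ {a 0}).ncard := by
    rw [← ncard_Ak_succ_sdiff_add_one a 0 hfin]
    push_cast
    ring
  rw [hcard, cmpl_length_add_one a hn hfin₁]
  refine ⟨fun L hL => ?_, by push_cast; ring⟩
  rw [cmpl_of_le_length a hn hfin₁ hL]
  push_cast
  ring

/- STATEMENT 7: the first values of the complexity function. -/
open Classical in
theorem stmt7 {A : Type*} [Fintype A] [Nonempty A]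
    (a : ℕ → A) (n : ℕ → ℕ) (hn : ∀ k, 2 ≤ n k) (ha : ∀ k, a k ≠ a (k + 1))
    (hAev : 2 ≤ (Aev a).ncard) :
    (∀ L : ℕ, L ≤ (ToeplitzBlock a n 0).length →
      (cmpl a n L : ℤ) = (((Ak a 0).ncard : ℤ) - 1) * (L : ℤ) + 1) ∧
    (cmpl a n ((ToeplitzBlock a n 0).length + 1) : ℤ) =
      (((Ak a 0).ncard : ℤ) - 1) * (((ToeplitzBlock a n 0).length : ℤ) + 1) +
        (if a 0 ∈ Ak a 1 then 1 else 0) :=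
  stmt7_general a n hn (Set.toFinite _)
end
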